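/- arXiv:1511.06967 — 2 statements merged into one kernel-verified Lean document; each statement's English description precedes it below -/
import Mathlib

section
/- Let A be a commutative ring such that for all n, every finitely generated projective module over A[T₁,...,T_n] is extended from A. Let I ⊂ A[x₁,...,x_m] be a monomial ideal and B = A[x]/I. Then every finitely generated projective B-module is extended from a finitely generated projective A-module. -/
open TensorProduct

universe u

namespace Vorst

/-- Every finitely generated projective `B`-module is extended from `A`. -/
def Ext (A B : Type u) [CommRing A] [CommRing B] [Algebra A B] : Prop :=
  ∀ (M : Type u) [AddCommGroup M] [Module B M], Module.Finite B M → Module.Projective B M →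
    ∃ (N : Type u) (_ : AddCommGroup N) (_ : Module A N),
      Module.Finite A N ∧ Module.Projective A N ∧ Nonempty (M ≃ₗ[B] B ⊗[A] N)

section
variable {A B C : Type u} [CommRing A] [CommRing B] [CommRing C]
  [Algebra A B] [Algebra A C]

theorem Ext.retract (h : Ext A B) (i : C →ₐ[A] B) (r : B →ₐ[A] C)
    (hri : ∀ c, r (i c) = c) : Ext A C := by
  intro M _ _ hf hp
  let _ : Algebra C B := i.toRingHom.toAlgebra
  let _ : Algebra B C := r.toRingHom.toAlgebra
  have : IsScalarTower C B C := .of_algebraMap_eq fun x => (hri x).symm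
  have : IsScalarTower A B C := .of_algebraMap_eq fun x => (r.commutes x).symm
  obtain ⟨N, _, _, hNf, hNp, ⟨e⟩⟩ := h (B ⊗[C] M) inferInstance inferInstance
  refine ⟨N, _, _, hNf, hNp, ⟨?_⟩⟩
  exact (TensorProduct.lid C M).symm ≪≫ₗ
    (AlgebraTensorModule.cancelBaseChange C B C C M).symm ≪≫ₗ e.baseChange B C _ _ ≪≫ₗ
    AlgebraTensorModule.cancelBaseChange A B C C N

theorem ker_char {M : Type u} [AddCommGroup M] [Module B M] [Algebra B C]
    (h : Function.Surjective (algebraMap B C)) (m : M) (hm : (1 : C) ⊗ₜ[B] m = 0) :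
    m ∈ RingHom.ker (algebraMap B C) • (⊤ : Submodule B M) := by
  let e : (B ⧸ RingHom.ker (algebraMap B C)) ≃ₐ[B] C :=
    Ideal.quotientKerAlgEquivOfSurjective (f := Algebra.ofId B C) h
  have h1 : (1 : B ⧸ RingHom.ker (algebraMap B C)) ⊗ₜ[B] m = 0 := by
    have := congrArg (e.symm.toLinearEquiv.rTensor M) hm
    simpa using this
  have h2 := congrArg (TensorProduct.quotTensorEquivQuotSMul M (RingHom.ker (algebraMap B C))) h1
  have h3 := TensorProduct.quotTensorEquivQuotSMul_mk_tmul
    (RingHom.ker (algebraMap B C)) (1 : B) m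
  rw [map_one, h2, map_zero, one_smul] at h3
  exact (Submodule.Quotient.mk_eq_zero _).1 h3.symm

theorem ker_char' {M : Type u} [AddCommGroup M] [Module B M] [Algebra B C]
    (m : M) (hm : m ∈ RingHom.ker (algebraMap B C) • (⊤ : Submodule B M)) :
    (1 : C) ⊗ₜ[B] m = 0 := by
  refine Submodule.smul_induction_on hm ?_ ?_
  · intro r hr n _
    rw [← TensorProduct.smul_tmul, Algebra.smul_def, (RingHom.mem_ker).1 hr]
    simp
  · intro x y hx hy
    rw [TensorProduct.tmul_add, hx, hy, add_zero]

theorem surj_char {M : Type u} [AddCommGroup M] [Module B M] [Algebra B C]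
    (h : Function.Surjective (algebraMap B C)) (z : C ⊗[B] M) :
    ∃ m : M, (1 : C) ⊗ₜ[B] m = z := by
  induction z with
  | zero => exact ⟨0, by simp⟩
  | tmul c m =>
    obtain ⟨b, rfl⟩ := h c
    exact ⟨b • m, by rw [← TensorProduct.smul_tmul, Algebra.smul_def, mul_one]⟩
  | add x y hx hy =>
    obtain ⟨a, rfl⟩ := hx
    obtain ⟨b, rfl⟩ := hy
    exact ⟨a + b, TensorProduct.tmul_add _ _ _⟩

theorem proj_inf {M : Type u} [AddCommGroup M] [Module B M] [Module.Projective B M]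
    {I J : Ideal B} (hIJ : I ⊓ J = ⊥) (m : M) (h1 : m ∈ I • (⊤ : Submodule B M))
    (h2 : m ∈ J • (⊤ : Submodule B M)) : m = 0 := by
  obtain ⟨s, hs⟩ := Module.projective_lifting_property (Finsupp.linearCombination B (id : M → M))
    LinearMap.id (Finsupp.linearCombination_id_surjective B M)
  have key : ∀ (K : Ideal B), m ∈ K • (⊤ : Submodule B M) → ∀ x, s m x ∈ K := by
    intro K hK x
    refine Submodule.smul_induction_on hK ?_ ?_
    · intro r hr n _
      rw [map_smul]
      exact K.mul_mem_right _ hr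
    · intro a b ha hb
      rw [map_add]
      exact K.add_mem ha hb
  have h0 : s m = 0 := by
    ext x
    have : s m x ∈ I ⊓ J := ⟨key I h1 x, key J h2 x⟩
    rwa [hIJ] at this
  have := LinearMap.congr_fun hs m
  simp only [LinearMap.comp_apply, h0, map_zero, LinearMap.id_apply] at this
  exact this.symm

theorem exists_lift {M Q : Type u} [AddCommGroup M] [Module B M] [AddCommGroup Q] [Module B Q]
    [Algebra B C] [Module.Projective B M] (hs : Function.Surjective (algebraMap B C))
    (e : C ⊗[B] M →ₗ[C] C ⊗[B] Q) :
    ∃ f : M →ₗ[B] Q, ∀ m, (1 : C) ⊗ₜ[B] f m = e (1 ⊗ₜ m) := by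
  obtain ⟨f, hf⟩ := Module.projective_lifting_property (TensorProduct.mk B C Q 1)
    ((e.restrictScalars B) ∘ₗ TensorProduct.mk B C M 1) (surj_char hs)
  exact ⟨f, fun m => LinearMap.congr_fun hf m⟩

theorem bij_of_mod {M : Type u} [AddCommGroup M] [Module B M]
    [Algebra B C] [Module.Finite B M] (hs : Function.Surjective (algebraMap B C))
    (hn : RingHom.ker (algebraMap B C) ≤ nilradical B)
    (f : M →ₗ[B] M) (hf : ∀ m, (1 : C) ⊗ₜ[B] f m = 1 ⊗ₜ m) : Function.Bijective f := by
  have hsurj : Function.Surjective f := by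
    rw [← LinearMap.range_eq_top, ← top_le_iff]
    refine Submodule.le_of_le_smul_of_le_jacobson_bot (I := RingHom.ker (algebraMap B C))
      Module.Finite.fg_top (hn.trans ?_) ?_
    · exact Ideal.radical_le_jacobson
    · intro m _
      have : m = f m + (m - f m) := by abel
      rw [this]
      refine Submodule.add_mem_sup ⟨m, rfl⟩ (ker_char hs _ ?_)
      rw [TensorProduct.tmul_sub, hf, sub_self]
  exact OrzechProperty.bijective_of_surjective_endomorphism f hsurj

/-- Nil extensions. -/
theorem Ext.of_nil [Algebra B C] [IsScalarTower A B C] (h : Ext A C)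
    (hs : Function.Surjective (algebraMap B C))
    (hn : RingHom.ker (algebraMap B C) ≤ nilradical B) : Ext A B := by
  intro M _ _ hf hp
  obtain ⟨N, _, _, hNf, hNp, ⟨e⟩⟩ := h (C ⊗[B] M) inferInstance inferInstance
  refine ⟨N, _, _, hNf, hNp, ?_⟩
  let e' : C ⊗[B] M ≃ₗ[C] C ⊗[B] (B ⊗[A] N) :=
    e ≪≫ₗ (AlgebraTensorModule.cancelBaseChange A B C C N).symm
  obtain ⟨f, hf⟩ := exists_lift hs e'.toLinearMap
  obtain ⟨g, hg⟩ := exists_lift hs e'.symm.toLinearMap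
  have h1 : Function.Bijective (g ∘ₗ f) := bij_of_mod hs hn _ fun m => by
    rw [LinearMap.comp_apply, hg, hf]; simp
  have h2 : Function.Bijective (f ∘ₗ g) := bij_of_mod hs hn _ fun m => by
    rw [LinearMap.comp_apply, hf, hg]; simp
  exact ⟨LinearEquiv.ofBijective f
    ⟨Function.Injective.of_comp (f := g) h1.1, Function.Surjective.of_comp (g := g) h2.2⟩⟩

/-- Base change of a trivialization. -/
theorem push_equiv {D : Type u} [CommRing D] [Algebra A D] [Algebra B C] [Algebra B D]
    {M N : Type u} [AddCommGroup M] [Module B M] [AddCommGroup N] [Module A N]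
    (π : C →ₐ[A] D) (hπ : ∀ b, π (algebraMap B C b) = algebraMap B D b)
    (e : C ⊗[B] M ≃ₗ[C] C ⊗[A] N) :
    ∃ E : D ⊗[B] M ≃ₗ[D] D ⊗[A] N,
      ∀ m, E (1 ⊗ₜ m) = π.toLinearMap.rTensor N (e (1 ⊗ₜ m)) := by
  let _ : Algebra C D := π.toRingHom.toAlgebra
  have : IsScalarTower B C D := .of_algebraMap_eq fun x => (hπ x).symm
  have : IsScalarTower A C D := .of_algebraMap_eq fun x => (π.commutes x).symm
  refine ⟨(AlgebraTensorModule.cancelBaseChange B C D D M).symm ≪≫ₗ e.baseChange C D _ _ ≪≫ₗ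
    AlgebraTensorModule.cancelBaseChange A C D D N, fun m => ?_⟩
  simp only [LinearEquiv.trans_apply, AlgebraTensorModule.cancelBaseChange_symm_tmul,
    LinearEquiv.baseChange_tmul]
  generalize e (1 ⊗ₜ m) = z
  induction z with
  | zero => simp
  | tmul c n =>
    rw [AlgebraTensorModule.cancelBaseChange_tmul, Algebra.smul_def, mul_one]
    rfl
  | add x y hx hy => rw [TensorProduct.tmul_add, map_add, map_add, hx, hy]

theorem rTensor_smul' {N : Type u} [AddCommGroup N] [Module A N]
    (π : B →ₐ[A] C) (b : B) (z : B ⊗[A] N) :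
    π.toLinearMap.rTensor N (b • z) = π b • π.toLinearMap.rTensor N z := by
  induction z with
  | zero => simp
  | tmul c n => simp [TensorProduct.smul_tmul']
  | add x y hx hy => rw [smul_add, map_add, map_add, hx, hy, smul_add]

/-- Lifting automorphisms along a split surjection. -/
theorem lift_aut {N : Type u} [AddCommGroup N] [Module A N]
    (π : B →ₐ[A] C) (s : C →ₐ[A] B) (hs : ∀ c, π (s c) = c) (θ : C ⊗[A] N ≃ₗ[C] C ⊗[A] N) :
    ∃ Θ : B ⊗[A] N ≃ₗ[B] B ⊗[A] N, ∀ z,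
      π.toLinearMap.rTensor N (Θ z) = θ (π.toLinearMap.rTensor N z) := by
  let _ : Algebra C B := s.toRingHom.toAlgebra
  have : IsScalarTower A C B := .of_algebraMap_eq fun x => (s.commutes x).symm
  let e := AlgebraTensorModule.cancelBaseChange A C B B N
  refine ⟨e.symm ≪≫ₗ θ.baseChange C B _ _ ≪≫ₗ e, fun z => ?_⟩
  have key : ∀ (b : B) (w : C ⊗[A] N),
      π.toLinearMap.rTensor N (e (b ⊗ₜ w)) = π b • w := by
    intro b w
    induction w with
    | zero => simp
    | tmul c n =>
      simp only [e, AlgebraTensorModule.cancelBaseChange_tmul, Algebra.smul_def,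
        LinearMap.rTensor_tmul, AlgHom.toLinearMap_apply, map_mul, TensorProduct.smul_tmul']
      rw [mul_comm]
      congr 2
      exact hs c
    | add x y hx hy => rw [TensorProduct.tmul_add, map_add, map_add, hx, hy, smul_add]
  induction z with
  | zero => simp
  | tmul b n =>
    simp only [LinearEquiv.trans_apply]
    have : e.symm (b ⊗ₜ n) = b ⊗ₜ (1 ⊗ₜ n) := rfl
    rw [this, LinearEquiv.baseChange_tmul, key, ← map_smul]
    simp [TensorProduct.smul_tmul']
  | add x y hx hy => simp only [map_add, hx, hy]

end

section patch
variable {A B B₁ B₂ B₀ : Type u} [CommRing A] [CommRing B] [CommRing B₁] [CommRing B₂]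
  [CommRing B₀] [Algebra A B] [Algebra A B₁] [Algebra A B₂] [Algebra A B₀]
  [Algebra B B₁] [Algebra B B₂] [Algebra B B₀]

theorem pb_range {M Q₁ Q₂ Q₀ : Type u} [AddCommGroup M] [Module B M] [Module.Projective B M]
    [AddCommGroup Q₁] [AddCommGroup Q₂] [AddCommGroup Q₀]
    (h₁ : Function.Surjective (algebraMap B B₁)) (h₂ : Function.Surjective (algebraMap B B₂))
    (h₀ : Function.Surjective (algebraMap B B₀))
    (hinf : RingHom.ker (algebraMap B B₁) ⊓ RingHom.ker (algebraMap B B₂) = ⊥)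
    (hsup : RingHom.ker (algebraMap B B₀) ≤
      RingHom.ker (algebraMap B B₁) ⊔ RingHom.ker (algebraMap B B₂))
    (e₁ : B₁ ⊗[B] M ≃+ Q₁) (e₂ : B₂ ⊗[B] M ≃+ Q₂) (e₀ : B₀ ⊗[B] M ≃+ Q₀)
    (t₁ : Q₁ → Q₀) (t₂ : Q₂ → Q₀) (ht₁ : ∀ m, t₁ (e₁ (1 ⊗ₜ m)) = e₀ (1 ⊗ₜ m))
    (ht₂ : ∀ m, t₂ (e₂ (1 ⊗ₜ m)) = e₀ (1 ⊗ₜ m)) :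
    (∀ m, e₁ (1 ⊗ₜ m) = 0 → e₂ (1 ⊗ₜ m) = 0 → m = 0) ∧
    (∀ a b, t₁ a = t₂ b ↔ ∃ m, e₁ (1 ⊗ₜ m) = a ∧ e₂ (1 ⊗ₜ m) = b) := by
  constructor
  · intro m hm₁ hm₂
    refine proj_inf hinf m (ker_char h₁ m ?_) (ker_char h₂ m ?_)
    · simpa using hm₁
    · simpa using hm₂
  · intro a b
    constructor
    · intro hab
      obtain ⟨x, hx⟩ := surj_char h₁ (e₁.symm a)
      obtain ⟨y, hy⟩ := surj_char h₂ (e₂.symm b)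
      obtain rfl : a = e₁ (1 ⊗ₜ x) := by simp [hx]
      obtain rfl : b = e₂ (1 ⊗ₜ y) := by simp [hy]
      rw [ht₁, ht₂] at hab
      have h0 : (1 : B₀) ⊗ₜ[B] (x - y) = 0 := by
        rw [TensorProduct.tmul_sub, e₀.injective hab, sub_self]
      have h3 := ker_char h₀ _ h0
      have h4 := Submodule.smul_mono_left (N := (⊤ : Submodule B M)) hsup h3
      rw [Submodule.sup_smul] at h4
      obtain ⟨j₁, hj₁, j₂, hj₂, hj⟩ := Submodule.mem_sup.1 h4
      refine ⟨x - j₁, ?_, ?_⟩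
      · rw [TensorProduct.tmul_sub, ker_char' j₁ hj₁, sub_zero]
      · have : x - j₁ = y + j₂ := by
          rw [sub_eq_iff_eq_add, add_assoc, add_comm j₂, hj]; abel
        rw [this, TensorProduct.tmul_add, ker_char' j₂ hj₂, add_zero]
    · rintro ⟨m, rfl, rfl⟩
      rw [ht₁, ht₂]

theorem Ext.patch [IsScalarTower A B B₁] [IsScalarTower A B B₂] [IsScalarTower A B B₀]
    (h₁ : Function.Surjective (algebraMap B B₁)) (h₂ : Function.Surjective (algebraMap B B₂))
    (h₀ : Function.Surjective (algebraMap B B₀))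
    (hinf : RingHom.ker (algebraMap B B₁) ⊓ RingHom.ker (algebraMap B B₂) = ⊥)
    (hsup : RingHom.ker (algebraMap B B₀) ≤
      RingHom.ker (algebraMap B B₁) ⊔ RingHom.ker (algebraMap B B₂))
    (π₁ : B₁ →ₐ[A] B₀) (hπ₁ : ∀ b, π₁ (algebraMap B B₁ b) = algebraMap B B₀ b)
    (π₂ : B₂ →ₐ[A] B₀) (hπ₂ : ∀ b, π₂ (algebraMap B B₂ b) = algebraMap B B₀ b)
    (s : B₀ →ₐ[A] B₁) (hs : ∀ c, π₁ (s c) = c) (ε : B₀ →ₐ[A] A)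
    (H₁ : Ext A B₁) (H₂ : Ext A B₂) : Ext A B := by
  intro M _ _ hf hp
  obtain ⟨N, _, _, hNf, hNp, ⟨e₁⟩⟩ := H₁ (B₁ ⊗[B] M) inferInstance inferInstance
  obtain ⟨N', _, _, hNf', hNp', ⟨e₂'⟩⟩ := H₂ (B₂ ⊗[B] M) inferInstance inferInstance
  refine ⟨N, _, _, hNf, hNp, ?_⟩
  have hN : Nonempty (N' ≃ₗ[A] N) := by
    let _ : Algebra B A := (ε.toRingHom.comp (algebraMap B B₀)).toAlgebra
    obtain ⟨E₁, -⟩ := push_equiv (ε.comp π₁) (fun b => congrArg ε (hπ₁ b)) e₁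
    obtain ⟨E₂, -⟩ := push_equiv (ε.comp π₂) (fun b => congrArg ε (hπ₂ b)) e₂'
    exact ⟨(TensorProduct.lid A N').symm ≪≫ₗ E₂.symm ≪≫ₗ E₁ ≪≫ₗ TensorProduct.lid A N⟩
  obtain ⟨n⟩ := hN
  let e₂ : B₂ ⊗[B] M ≃ₗ[B₂] B₂ ⊗[A] N := e₂' ≪≫ₗ n.baseChange A B₂ _ _
  obtain ⟨E₁, hE₁⟩ := push_equiv π₁ hπ₁ e₁
  obtain ⟨E₂, hE₂⟩ := push_equiv π₂ hπ₂ e₂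
  obtain ⟨Θ, hΘ⟩ := lift_aut π₁ s hs (E₁.symm ≪≫ₗ E₂)
  let f₁ : B₁ ⊗[B] M ≃ₗ[B₁] B₁ ⊗[A] N := e₁ ≪≫ₗ Θ
  let t₁ := π₁.toLinearMap.rTensor N
  let t₂ := π₂.toLinearMap.rTensor N
  obtain ⟨i1, r1⟩ := pb_range h₁ h₂ h₀ hinf hsup f₁.toAddEquiv e₂.toAddEquiv E₂.toAddEquiv
    t₁ t₂ (fun m => by
      change t₁ (Θ (e₁ (1 ⊗ₜ m))) = E₂ (1 ⊗ₜ m)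
      rw [hΘ, ← hE₁]; simp) (fun m => (hE₂ m).symm)
  let c₁ := AlgebraTensorModule.cancelBaseChange A B B₁ B₁ N
  let c₂ := AlgebraTensorModule.cancelBaseChange A B B₂ B₂ N
  let c₀ := AlgebraTensorModule.cancelBaseChange A B B₀ B₀ N
  obtain ⟨i2, r2⟩ := pb_range (M := B ⊗[A] N) h₁ h₂ h₀ hinf hsup c₁.toAddEquiv c₂.toAddEquiv
    c₀.toAddEquiv t₁ t₂ (fun m => by
      change t₁ (c₁ (1 ⊗ₜ m)) = c₀ (1 ⊗ₜ m)
      induction m with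
      | zero => simp
      | tmul b n => simp [c₁, c₀, t₁, Algebra.smul_def, hπ₁]
      | add x y hx hy => simp only [TensorProduct.tmul_add, map_add, hx, hy]) (fun m => by
      change t₂ (c₂ (1 ⊗ₜ m)) = c₀ (1 ⊗ₜ m)
      induction m with
      | zero => simp
      | tmul b n => simp [c₂, c₀, t₂, Algebra.smul_def, hπ₂]
      | add x y hx hy => simp only [TensorProduct.tmul_add, map_add, hx, hy])
  let F : M →ₗ[B] (B₁ ⊗[A] N) × (B₂ ⊗[A] N) :=
    ((f₁.toLinearMap.restrictScalars B) ∘ₗ TensorProduct.mk B B₁ M 1).prod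
      ((e₂.toLinearMap.restrictScalars B) ∘ₗ TensorProduct.mk B B₂ M 1)
  let G : (B ⊗[A] N) →ₗ[B] (B₁ ⊗[A] N) × (B₂ ⊗[A] N) :=
    ((c₁.toLinearMap.restrictScalars B) ∘ₗ TensorProduct.mk B B₁ (B ⊗[A] N) 1).prod
      ((c₂.toLinearMap.restrictScalars B) ∘ₗ TensorProduct.mk B B₂ (B ⊗[A] N) 1)
  have hF : Function.Injective F := by
    rw [injective_iff_map_eq_zero]
    exact fun m hm => i1 m (congrArg Prod.fst hm) (congrArg Prod.snd hm)
  have hG : Function.Injective G := by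
    rw [injective_iff_map_eq_zero]
    exact fun m hm => i2 m (congrArg Prod.fst hm) (congrArg Prod.snd hm)
  have hFG : LinearMap.range F = LinearMap.range G := by
    ext ⟨a, b⟩
    have h := (r1 a b).symm.trans (r2 a b)
    constructor
    · rintro ⟨m, hm⟩
      obtain ⟨q, hq1, hq2⟩ := h.1 ⟨m, congrArg Prod.fst hm, congrArg Prod.snd hm⟩
      exact ⟨q, Prod.ext hq1 hq2⟩
    · rintro ⟨m, hm⟩
      obtain ⟨q, hq1, hq2⟩ := h.2 ⟨m, congrArg Prod.fst hm, congrArg Prod.snd hm⟩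
      exact ⟨q, Prod.ext hq1 hq2⟩
  exact ⟨LinearEquiv.ofInjective F hF ≪≫ₗ LinearEquiv.ofEq _ _ hFG ≪≫ₗ
    (LinearEquiv.ofInjective G hG).symm⟩

end patch
section quot
variable {A R : Type u} [CommRing A] [CommRing R] [Algebra A R]

theorem Ext.patch_quot {I I₁ I₂ I₀ : Ideal R} (hI₁ : I ≤ I₁) (hI₂ : I ≤ I₂)
    (hinf : I₁ ⊓ I₂ ≤ I) (h10 : I₁ ≤ I₀) (h20 : I₂ ≤ I₀) (hsup : I₀ ≤ I₁ ⊔ I₂)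
    (σ : R →ₐ[A] R) (hσ : ∀ x ∈ I₀, σ x ∈ I₁) (hσ' : ∀ x, σ x - x ∈ I₀)
    (ε : R →ₐ[A] A) (hε : ∀ x ∈ I₀, ε x = 0)
    (H₁ : Ext A (R ⧸ I₁)) (H₂ : Ext A (R ⧸ I₂)) : Ext A (R ⧸ I) := by
  have hI₀ := hI₁.trans h10
  let _ : Algebra (R ⧸ I) (R ⧸ I₁) := (Ideal.Quotient.factor hI₁).toAlgebra
  let _ : Algebra (R ⧸ I) (R ⧸ I₂) := (Ideal.Quotient.factor hI₂).toAlgebra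
  let _ : Algebra (R ⧸ I) (R ⧸ I₀) := (Ideal.Quotient.factor hI₀).toAlgebra
  have : IsScalarTower A (R ⧸ I) (R ⧸ I₁) := .of_algebraMap_eq fun x => rfl
  have : IsScalarTower A (R ⧸ I) (R ⧸ I₂) := .of_algebraMap_eq fun x => rfl
  have : IsScalarTower A (R ⧸ I) (R ⧸ I₀) := .of_algebraMap_eq fun x => rfl
  have hker : ∀ (K : Ideal R) (hK : I ≤ K) (x : R),
      Ideal.Quotient.factor hK (Ideal.Quotient.mk I x) = 0 ↔ x ∈ K := by
    intro K hK x
    rw [Ideal.Quotient.factor_mk, Ideal.Quotient.eq_zero_iff_mem]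
  refine Ext.patch (B₁ := R ⧸ I₁) (B₂ := R ⧸ I₂) (B₀ := R ⧸ I₀)
    (Ideal.Quotient.factor_surjective hI₁)
    (Ideal.Quotient.factor_surjective hI₂) (Ideal.Quotient.factor_surjective hI₀) ?_ ?_
    (Ideal.Quotient.factorₐ A h10) ?_ (Ideal.Quotient.factorₐ A h20) ?_
    (Ideal.quotientMapₐ I₁ σ hσ) ?_ (Ideal.Quotient.liftₐ I₀ ε hε) H₁ H₂
  · rw [eq_bot_iff]
    rintro x ⟨hx1, hx2⟩
    obtain ⟨x, rfl⟩ := Ideal.Quotient.mk_surjective x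
    have h1 := (hker I₁ hI₁ x).1 hx1
    have h2 := (hker I₂ hI₂ x).1 hx2
    exact Ideal.Quotient.eq_zero_iff_mem.2 (hinf ⟨h1, h2⟩)
  · intro x hx
    obtain ⟨x, rfl⟩ := Ideal.Quotient.mk_surjective x
    have h0 := hsup ((hker I₀ hI₀ x).1 hx)
    obtain ⟨a, ha, b, hb, rfl⟩ := Submodule.mem_sup.1 h0
    rw [map_add]
    exact Submodule.add_mem_sup ((hker I₁ hI₁ a).2 ha) ((hker I₂ hI₂ b).2 hb)
  · intro b
    obtain ⟨x, rfl⟩ := Ideal.Quotient.mk_surjective b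
    rfl
  · intro b
    obtain ⟨x, rfl⟩ := Ideal.Quotient.mk_surjective b
    rfl
  · intro b
    obtain ⟨x, rfl⟩ := Ideal.Quotient.mk_surjective b
    change Ideal.Quotient.mk I₀ (σ x) = Ideal.Quotient.mk I₀ x
    exact Ideal.Quotient.eq.2 (hσ' x)

theorem Ext.of_nil_quot {I K : Ideal R} (hle : I ≤ K) (H : Ext A (R ⧸ K))
    (hn : ∀ p ∈ K, Ideal.Quotient.mk I p ∈ nilradical (R ⧸ I)) : Ext A (R ⧸ I) := by
  let _ : Algebra (R ⧸ I) (R ⧸ K) := (Ideal.Quotient.factor hle).toAlgebra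
  have : IsScalarTower A (R ⧸ I) (R ⧸ K) := .of_algebraMap_eq fun x => rfl
  refine H.of_nil (Ideal.Quotient.factor_surjective hle) ?_
  intro x hx
  obtain ⟨p, rfl⟩ := Ideal.Quotient.mk_surjective x
  exact hn p (Ideal.Quotient.eq_zero_iff_mem.1 hx)

end quot

section mono
open MvPolynomial
variable (A : Type u) [CommRing A] {m : ℕ}

/-- The squarefree monomial ideal attached to an upper set of subsets. -/
noncomputable def J (F : UpperSet (Finset (Fin m))) : Ideal (MvPolynomial (Fin m) A) :=
  restrictSupportIdeal (R := A) {d : Fin m →₀ ℕ | d.support ∈ F}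
    (fun _ _ hab ha => F.upper (Finsupp.support_mono hab) ha)

variable {A}

theorem mem_J {F : UpperSet (Finset (Fin m))} {p : MvPolynomial (Fin m) A} :
    p ∈ J A F ↔ ∀ d, coeff d p ≠ 0 → d.support ∈ F := by
  change (p.support : Set (Fin m →₀ ℕ)) ⊆ _ ↔ _
  simp [Set.subset_def]

theorem monomial_mem_J {F : UpperSet (Finset (Fin m))} {d : Fin m →₀ ℕ} (c : A)
    (h : d.support ∈ F) : monomial d c ∈ J A F := by
  rw [mem_J]
  intro e he
  rw [coeff_monomial] at he
  split_ifs at he with h'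
  · rwa [← h']
  · exact absurd rfl he

variable (A) in
/-- Set the variables in `T` to zero. -/
noncomputable def Z (T : Set (Fin m)) : MvPolynomial (Fin m) A →ₐ[A] MvPolynomial (Fin m) A :=
  open Classical in aeval (fun i => if i ∈ T then 0 else X i)

theorem Z_monomial_zero (T : Set (Fin m)) (d : Fin m →₀ ℕ) (c : A) (i : Fin m)
    (hi : i ∈ d.support) (hT : i ∈ T) : Z A T (monomial d c) = 0 := by
  classical
  rw [Z, aeval_monomial, Finsupp.prod, Finset.prod_eq_zero hi, mul_zero]
  rw [if_pos hT, zero_pow (Finsupp.mem_support_iff.1 hi)]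

theorem Z_monomial_self (T : Set (Fin m)) (d : Fin m →₀ ℕ) (c : A)
    (h : ∀ i ∈ d.support, i ∉ T) : Z A T (monomial d c) = monomial d c := by
  classical
  rw [Z, aeval_monomial, monomial_eq, Finsupp.prod, Finsupp.prod]
  congr 1
  exact Finset.prod_congr rfl fun i hi => by rw [if_neg (h i hi)]

theorem Z_mem (T : Set (Fin m)) (F : UpperSet (Finset (Fin m)))
    (K : Ideal (MvPolynomial (Fin m) A))
    (h : ∀ d c, d.support ∈ F → (∀ i ∈ d.support, i ∉ T) → monomial d c ∈ K)
    (p : MvPolynomial (Fin m) A) (hp : p ∈ J A F) : Z A T p ∈ K := by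
  rw [p.as_sum, map_sum]
  refine K.sum_mem fun d hd => ?_
  by_cases hT : ∀ i ∈ d.support, i ∉ T
  · rw [Z_monomial_self T d _ hT]
    exact h d _ (mem_J.1 hp d (mem_support_iff.1 hd)) hT
  · push Not at hT
    obtain ⟨i, hi, hiT⟩ := hT
    rw [Z_monomial_zero T d _ i hi hiT]
    exact K.zero_mem

theorem X_mem_J {F : UpperSet (Finset (Fin m))} {i : Fin m} (h : {i} ∈ F) :
    (X i : MvPolynomial (Fin m) A) ∈ J A F := by
  refine monomial_mem_J 1 ?_
  rwa [Finsupp.support_single_ne_zero _ one_ne_zero]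

theorem Z_sub (T : Set (Fin m)) (F : UpperSet (Finset (Fin m)))
    (h : ∀ i ∈ T, {i} ∈ F) (p : MvPolynomial (Fin m) A) : Z A T p - p ∈ J A F := by
  classical
  have : (Ideal.Quotient.mkₐ A (J A F)).comp (Z A T) = Ideal.Quotient.mkₐ A (J A F) := by
    refine MvPolynomial.algHom_ext fun i => ?_
    simp only [AlgHom.comp_apply, Z, aeval_X]
    split_ifs with hi
    · rw [map_zero]
      exact (Ideal.Quotient.eq_zero_iff_mem.2 (X_mem_J (h i hi))).symm
    · rfl
  exact Ideal.Quotient.eq.1 (AlgHom.congr_fun this p)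

theorem base_case (hR : Ext A (MvPolynomial (Fin m) A)) (F : UpperSet (Finset (Fin m)))
    (h : ∀ s ∈ F, ∃ i ∈ s, {i} ∈ F) : Ext A (MvPolynomial (Fin m) A ⧸ J A F) := by
  let T : Set (Fin m) := {i | {i} ∈ F}
  have hZ : ∀ p ∈ J A F, Z A T p = 0 := fun p hp => by
    rw [← Ideal.mem_bot]
    refine Z_mem T F ⊥ (fun d c hd hT => ?_) p hp
    obtain ⟨i, hi, hi'⟩ := h _ hd
    exact absurd hi' (hT i hi)
  refine hR.retract (Ideal.Quotient.liftₐ (J A F) (Z A T) hZ) (Ideal.Quotient.mkₐ A (J A F)) ?_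
  intro c
  obtain ⟨x, rfl⟩ := Ideal.Quotient.mk_surjective c
  exact Ideal.Quotient.eq.2 (Z_sub T F (fun i hi => hi) x)

/-- The non-faces of the star of `v`. -/
def star (F : UpperSet (Finset (Fin m))) (v : Fin m) : UpperSet (Finset (Fin m)) :=
  ⟨{s | insert v s ∈ F}, fun _ _ h hs => F.upper (Finset.insert_subset_insert v h) hs⟩

/-- The non-faces of the deletion of `v`. -/
def del (F : UpperSet (Finset (Fin m))) (v : Fin m) : UpperSet (Finset (Fin m)) :=
  ⟨{s | s ∈ F ∨ v ∈ s}, fun _ _ h hs => hs.imp (fun h' => F.upper h h') (fun h' => h h')⟩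

/-- The non-faces of the link of `v`. -/
def link (F : UpperSet (Finset (Fin m))) (v : Fin m) : UpperSet (Finset (Fin m)) :=
  ⟨{s | insert v s ∈ F ∨ v ∈ s}, fun _ _ h hs =>
    hs.imp (fun h' => F.upper (Finset.insert_subset_insert v h) h') (fun h' => h h')⟩

theorem mem_star {F : UpperSet (Finset (Fin m))} {v : Fin m} {s : Finset (Fin m)} :
    s ∈ star F v ↔ insert v s ∈ F := Iff.rfl
theorem mem_del {F : UpperSet (Finset (Fin m))} {v : Fin m} {s : Finset (Fin m)} :
    s ∈ del F v ↔ s ∈ F ∨ v ∈ s := Iff.rfl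
theorem mem_link {F : UpperSet (Finset (Fin m))} {v : Fin m} {s : Finset (Fin m)} :
    s ∈ link F v ↔ insert v s ∈ F ∨ v ∈ s := Iff.rfl

theorem J_mono {F G : UpperSet (Finset (Fin m))} (h : ∀ s, s ∈ F → s ∈ G) : J A F ≤ J A G :=
  fun _ hp => mem_J.2 fun d hd => h _ (mem_J.1 hp d hd)

theorem squarefree_case (hR : Ext A (MvPolynomial (Fin m) A)) (F : UpperSet (Finset (Fin m)))
    (h0 : ∅ ∉ F) : Ext A (MvPolynomial (Fin m) A ⧸ J A F) := by
  have hfin : Finite (UpperSet (Finset (Fin m))) :=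
    Finite.of_injective (fun F => (F : Set (Finset (Fin m)))) SetLike.coe_injective
  induction F using WellFoundedLT.induction with
  | ind F ih =>
  by_cases hv : ∃ v, {v} ∉ F ∧ ∃ s, s ∉ F ∧ insert v s ∈ F
  · obtain ⟨v, hv, s, hs, hvs⟩ := hv
    have up : ∀ t, t ∈ F → insert v t ∈ F := fun t ht => F.upper (Finset.subset_insert v t) ht
    have hF1 : ∀ t, t ∈ F → t ∈ star F v := up
    have hF2 : ∀ t, t ∈ F → t ∈ del F v := fun t ht => Or.inl ht
    have lt1 : star F v < F := lt_of_le_of_ne hF1 (fun h => hs (h ▸ (mem_star.2 hvs)))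
    have lt2 : del F v < F := lt_of_le_of_ne hF2 (fun h => hv (by
      rw [← h, mem_del]; right; simp))
    refine Ext.patch_quot (I₁ := J A (star F v)) (I₂ := J A (del F v)) (I₀ := J A (link F v))
      (J_mono hF1) (J_mono hF2) ?_ (J_mono fun t ht => Or.inl ht)
      (J_mono fun t ht => ht.imp (up t) id) ?_ (Z A {v}) ?_ ?_ (aeval 0) ?_
      (ih _ lt1 ?_) (ih _ lt2 ?_)
    · rintro p ⟨hp1, hp2⟩
      rw [mem_J]
      intro d hd
      rcases mem_J.1 hp2 d hd with h | h
      · exact h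
      · have := mem_star.1 (mem_J.1 hp1 d hd)
        rwa [Finset.insert_eq_of_mem h] at this
    · intro p hp
      rw [p.as_sum]
      refine Ideal.sum_mem _ fun d hd => ?_
      rcases mem_J.1 hp d (mem_support_iff.1 hd) with h | h
      · exact Ideal.mem_sup_left (monomial_mem_J _ h)
      · exact Ideal.mem_sup_right (monomial_mem_J _ (Or.inr h))
    · refine Z_mem _ _ _ fun d c hd hT => monomial_mem_J c ?_
      rcases hd with h | h
      · exact h
      · exact absurd rfl (hT v h)
    · refine Z_sub _ _ fun i hi => ?_
      rw [Set.mem_singleton_iff.1 hi, mem_link]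
      simp
    · intro p hp
      rw [aeval_zero]
      by_contra hne
      have : constantCoeff p ≠ 0 := fun h => hne (by rw [h, map_zero])
      rcases mem_J.1 hp 0 this with h | h
      · exact hv (by simpa using h)
      · simp at h
    · rw [mem_star]; exact fun h => hv (by simpa using h)
    · rw [mem_del]; simpa using h0
  · push Not at hv
    refine base_case hR F fun s hs => ?_
    by_contra! hcon
    have : ∀ t : Finset (Fin m), (∀ i ∈ t, {i} ∉ F) → t ∉ F := by
      intro t
      induction t using Finset.induction_on with
      | empty => exact fun _ => h0
      | insert a t _ iht =>
        intro hi
        exact hv a (hi a (Finset.mem_insert_self a t)) t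
          (iht fun i hit => hi i (Finset.mem_insert_of_mem hit))
    exact this s hcon hs

theorem monomial_case (hR : Ext A (MvPolynomial (Fin m) A)) (S : Set (Fin m →₀ ℕ)) :
    Ext A (MvPolynomial (Fin m) A ⧸
      Ideal.span ((fun d => MvPolynomial.monomial d (1 : A)) '' S)) := by
  by_cases hS : (0 : Fin m →₀ ℕ) ∈ S
  · intro M _ _ _ _
    have htop : Ideal.span ((fun d => MvPolynomial.monomial d (1 : A)) '' S) = ⊤ :=
      (Ideal.eq_top_iff_one _).2 (Ideal.subset_span ⟨0, hS, rfl⟩)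
    have : Subsingleton (MvPolynomial (Fin m) A ⧸
        Ideal.span ((fun d => MvPolynomial.monomial d (1 : A)) '' S)) :=
      Ideal.Quotient.subsingleton_iff.2 htop
    have : Subsingleton M := Module.subsingleton (MvPolynomial (Fin m) A ⧸
        Ideal.span ((fun d => MvPolynomial.monomial d (1 : A)) '' S)) M
    refine ⟨PUnit, inferInstance, inferInstance, inferInstance, inferInstance, ⟨?_⟩⟩
    have : Subsingleton ((MvPolynomial (Fin m) A ⧸
        Ideal.span ((fun d => MvPolynomial.monomial d (1 : A)) '' S)) ⊗[A] PUnit.{u+1}) :=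
      Module.subsingleton (MvPolynomial (Fin m) A ⧸
        Ideal.span ((fun d => MvPolynomial.monomial d (1 : A)) '' S)) _
    exact { (0 : M →ₗ[_] _) with
            invFun := 0
            left_inv := fun _ => Subsingleton.elim _ _
            right_inv := fun _ => Subsingleton.elim _ _ }
  · let F : UpperSet (Finset (Fin m)) := ⟨{t | ∃ d ∈ S, d.support ⊆ t},
      fun _ _ h ⟨d, hd, hdt⟩ => ⟨d, hd, hdt.trans h⟩⟩
    have h0 : ∅ ∉ F := by
      rintro ⟨d, hd, hd0⟩
      rw [Finset.subset_empty, Finsupp.support_eq_empty] at hd0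
      exact hS (hd0 ▸ hd)
    have hle : Ideal.span ((fun d => MvPolynomial.monomial d (1 : A)) '' S) ≤ J A F := by
      rw [Ideal.span_le]
      rintro _ ⟨d, hd, rfl⟩
      exact monomial_mem_J 1 ⟨d, hd, subset_rfl⟩
    have key := squarefree_case hR F h0
    generalize hI : Ideal.span ((fun d => MvPolynomial.monomial d (1 : A)) '' S) = I at *
    refine key.of_nil_quot hle fun p hp => ?_
    rw [p.as_sum, map_sum]
    refine Ideal.sum_mem _ fun d hd => ?_
    obtain ⟨e, he, hed⟩ := mem_J.1 hp d (mem_support_iff.1 hd)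
    rw [mem_nilradical]
    refine ⟨∑ i, e i, ?_⟩
    rw [← map_pow, Ideal.Quotient.eq_zero_iff_mem, ← hI, mem_ideal_span_monomial_image]
    intro f hf
    refine ⟨e, he, ?_⟩
    rw [monomial_pow] at hf
    have hf' := Finset.mem_singleton.1 (support_monomial_subset hf)
    rw [hf']
    intro i
    rw [Finsupp.smul_apply, smul_eq_mul]
    by_cases hi : e i = 0
    · rw [hi]; exact Nat.zero_le _
    · have h1 : d i ≠ 0 := Finsupp.mem_support_iff.1 (hed (Finsupp.mem_support_iff.2 hi))
      calc e i ≤ ∑ i, e i := Finset.single_le_sum (fun _ _ => Nat.zero_le _) (Finset.mem_univ i)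
        _ ≤ _ := Nat.le_mul_of_pos_right _ (Nat.pos_of_ne_zero h1)

end mono

end Vorst

/-- Vorst's theorem: let `A` be a ring such that for all `n` every finitely generated
projective module over `A[T₁,…,T_n]` is extended from `A`. If `I ⊆ A[x₁,…,x_m]` is a
monomial ideal and `B = A[x]/I`, then every finitely generated projective `B`-module is
extended from a finitely generated projective `A`-module. -/
theorem vorst_monomial_extension (A : Type u) [CommRing A]
    (hA : ∀ (n : ℕ) (P : Type u) (_ : AddCommGroup P)
      (_ : Module (MvPolynomial (Fin n) A) P),
      Module.Finite (MvPolynomial (Fin n) A) P →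
      Module.Projective (MvPolynomial (Fin n) A) P →
      ∃ (N : Type u) (_ : AddCommGroup N) (_ : Module A N),
        Module.Finite A N ∧ Module.Projective A N ∧
        Nonempty (P ≃ₗ[MvPolynomial (Fin n) A] (MvPolynomial (Fin n) A ⊗[A] N)))
    (m : ℕ) (S : Set (Fin m →₀ ℕ)) (I : Ideal (MvPolynomial (Fin m) A))
    (hI : I = Ideal.span ((fun d => MvPolynomial.monomial d (1 : A)) '' S))
    (M : Type u) [AddCommGroup M] [Module (MvPolynomial (Fin m) A ⧸ I) M]
    (hMfin : Module.Finite (MvPolynomial (Fin m) A ⧸ I) M)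
    (hMproj : Module.Projective (MvPolynomial (Fin m) A ⧸ I) M) :
    ∃ (N : Type u) (_ : AddCommGroup N) (_ : Module A N),
      Module.Finite A N ∧ Module.Projective A N ∧
      Nonempty (M ≃ₗ[MvPolynomial (Fin m) A ⧸ I] ((MvPolynomial (Fin m) A ⧸ I) ⊗[A] N)) := by
  subst hI
  have hR : Vorst.Ext A (MvPolynomial (Fin m) A) := fun P _ _ hf hp => hA m P _ _ hf hp
  exact Vorst.monomial_case hR S M hMfin hMproj
end

section
/- Let (A, m) be an excellent Henselian local ring, and suppose every A-algebra morphism from a finite type A-algebra to Â factors through a smooth A-algebra (General Neron Desingularization). Then for every finite type ℤ-subalgebra E of A, the inclusion E → A factors through a regular local ring essentially of finite type over ℤ, provided Â is a filtered inductive limit of regular local rings essentially of finite type over ℤ. -/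
open IsLocalRing

universe u v

/-- The `m`-adic completion of a local ring. -/
noncomputable abbrev AdicCompl (A : Type*) [CommRing A] [IsLocalRing A] :=
  AdicCompletion (maximalIdeal A) A

/-- A regular local ring: a Noetherian local ring whose maximal ideal can be generated by
`d` elements, where `d` is the Krull dimension. -/
def IsRegularLocal (R : Type*) [CommRing R] [IsLocalRing R] : Prop :=
  IsNoetherianRing R ∧ ∃ s : Finset R,
    Ideal.span (s : Set R) = maximalIdeal R ∧ (s.card : WithBot ℕ∞) = ringKrullDim R

open scoped TensorProduct

/-- Lifting residue points of standard etale algebras over a Henselian local ring. -/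
theorem henselian_lift_standardEtale {R A S : Type*} [CommRing R] [CommRing A] [IsLocalRing A]
    [HenselianLocalRing A] [CommRing S] [Algebra R A] [Algebra R S]
    [Algebra.IsStandardEtale R S] (ψ : S →ₐ[R] ResidueField A) :
    ∃ σ : S →ₐ[R] A, ∀ x, residue A (σ x) = ψ x := by
  obtain ⟨P⟩ := Algebra.IsStandardEtale.nonempty_standardEtalePresentation (R := R) (S := S)
  have h0 : P.P.HasMap (ψ P.x) := P.hasMap.map ψ
  have hd := h0.isUnit_derivative_f
  have key := ((HenselianLocalRing.TFAE A).out 0 1).mp ‹HenselianLocalRing A›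
  obtain ⟨a, ha, ha'⟩ := key (P.f.map (algebraMap R A)) (P.monic_f.map _) (ψ P.x)
    (by rw [Polynomial.aeval_map_algebraMap]; exact h0.1)
    (by rw [Polynomial.derivative_map, Polynomial.aeval_map_algebraMap]; exact hd.ne_zero)
  let r : A →ₐ[R] ResidueField A := IsScalarTower.toAlgHom R A (ResidueField A)
  have hr : ∀ x, r x = residue A x := fun x => rfl
  have hm : P.P.HasMap a := by
    refine ⟨?_, ?_⟩
    · rw [← Polynomial.aeval_map_algebraMap A, Polynomial.coe_aeval_eq_eval]; exact ha
    · apply isUnit_of_map_unit (residue A)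
      rw [← hr, ← Polynomial.aeval_algHom_apply, hr, ha']
      exact h0.2
  refine ⟨(P.P.lift a hm).comp P.equivRing.toAlgHom, fun x => ?_⟩
  have : r.comp ((P.P.lift a hm).comp P.equivRing.toAlgHom) = ψ := by
    apply P.hom_ext
    simp [hr, ha']
  exact congr($this x)

/-- Lifting residue points of smooth algebras over a Henselian local ring. -/
theorem henselian_lift_smooth {A C : Type*} [CommRing A] [IsLocalRing A]
    [HenselianLocalRing A] [CommRing C] [Algebra A C]
    [Algebra.Smooth A C] (φ : C →ₐ[A] ResidueField A) :
    ∃ σ : C →ₐ[A] A, ∀ x, residue A (σ x) = φ x := by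
  let p : Ideal C := RingHom.ker φ
  have hp : p.IsPrime := RingHom.ker_isPrime _
  have : Algebra.IsSmoothAt A p := inferInstance
  obtain ⟨g, hg, n, _, _, _⟩ := Algebra.IsSmoothAt.exists_isStandardEtale_mvPolynomial
    (R := A) (S := C) (p := p)
  have hu : IsUnit (φ g) := by
    rw [isUnit_iff_ne_zero]; exact hg
  let ψ : Localization.Away g →+* ResidueField A :=
    IsLocalization.Away.lift g (g := φ.toRingHom) hu
  have hψ : ∀ c, ψ (algebraMap C _ c) = φ c := fun c =>
    IsLocalization.Away.lift_eq g (g := φ.toRingHom) hu c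
  choose a ha using fun i : Fin n => residue_surjective
    (ψ (algebraMap (MvPolynomial (Fin n) A) _ (MvPolynomial.X i)))
  let ev : MvPolynomial (Fin n) A →ₐ[A] A := MvPolynomial.aeval a
  letI : Algebra (MvPolynomial (Fin n) A) A := ev.toRingHom.toAlgebra
  let ψ' : Localization.Away g →ₐ[MvPolynomial (Fin n) A] ResidueField A :=
    { ψ with
      commutes' := by
        have : ψ.comp (algebraMap (MvPolynomial (Fin n) A) (Localization.Away g)) =
            (residue A).comp ev.toRingHom := by
          apply MvPolynomial.ringHom_ext
          · intro r
            have h1 : algebraMap (MvPolynomial (Fin n) A) (Localization.Away g)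
                (MvPolynomial.C r) = algebraMap C _ (algebraMap A C r) := by
              rw [← MvPolynomial.algebraMap_eq, ← IsScalarTower.algebraMap_apply,
                ← IsScalarTower.algebraMap_apply]
            simp only [RingHom.comp_apply, h1, hψ]
            simp [ev]
          · intro i
            simp [ha, ev]
        intro r
        exact congr($this r) }
  obtain ⟨σ, hσ⟩ := henselian_lift_standardEtale ψ'
  have hσA : ∀ r : A, σ (algebraMap A _ r) = r := by
    intro r
    rw [IsScalarTower.algebraMap_apply A (MvPolynomial (Fin n) A), σ.commutes]
    change ev (algebraMap A _ r) = r
    simp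
  refine ⟨{ σ.toRingHom.comp (algebraMap C (Localization.Away g)) with
    commutes' := fun r => ?_ }, fun x => ?_⟩
  · change σ (algebraMap C _ (algebraMap A C r)) = r
    rw [← IsScalarTower.algebraMap_apply, hσA]
  · change residue A (σ (algebraMap C _ x)) = φ x
    rw [hσ]
    exact hψ x

/-- A finite type `ℤ`-algebra mapping to a directed limit factors through a stage. -/
theorem factor_directLimit {ι : Type v} [Preorder ι] [IsDirected ι (· ≤ ·)] [Nonempty ι]
    (G : ι → Type u) [∀ i, CommRing (G i)]
    (f : ∀ i j : ι, i ≤ j → G i →+* G j)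
    [DirectedSystem G fun i j h => f i j h]
    {E : Type*} [CommRing E] (hE : Algebra.FiniteType ℤ E)
    (w : E →+* Ring.DirectLimit G fun i j h => f i j h) :
    ∃ (i : ι) (α : E →+* G i), (Ring.DirectLimit.of G (fun i j h => f i j h) i).comp α = w := by
  have hfp : Algebra.FinitePresentation ℤ E := Algebra.FinitePresentation.of_finiteType.mp hE
  obtain ⟨n, π, hπ, hker⟩ := hfp.out
  choose i x hx using fun k : Fin n => Ring.DirectLimit.exists_of (w (π (MvPolynomial.X k)))
  obtain ⟨j, hj⟩ := (Set.finite_range i).bddAbove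
  have hj : ∀ k, i k ≤ j := fun k => hj ⟨k, rfl⟩
  let γ : MvPolynomial (Fin n) ℤ →+* G j :=
    (MvPolynomial.aeval (R := ℤ) fun k => f (i k) j (hj k) (x k)).toRingHom
  have hγ : (Ring.DirectLimit.of G (fun i j h => f i j h) j).comp γ = w.comp π.toRingHom := by
    apply MvPolynomial.ringHom_ext
    · intro r; simp
    · intro k; simp [γ, hx]
  obtain ⟨s, hs⟩ := hker
  have hz : ∀ p ∈ s, ∃ (l : ι) (h : j ≤ l), f j l h (γ p) = 0 := by
    intro p hp
    apply Ring.DirectLimit.of.zero_exact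
    have : π p = 0 := by
      have : p ∈ RingHom.ker π.toRingHom := hs ▸ Ideal.subset_span hp
      exact this
    have h2 := congr($hγ p)
    simp only [RingHom.comp_apply] at h2
    rw [h2]
    change w (π p) = 0
    rw [this, map_zero]
  choose! l hl using hz
  obtain ⟨m, hm⟩ := (((s.finite_toSet.image l)).insert j).bddAbove
  have hjm : j ≤ m := hm (Set.mem_insert _ _)
  have hk : RingHom.ker π.toRingHom ≤ RingHom.ker ((f j m hjm).comp γ) := by
    show RingHom.ker π.toRingHom ≤ _
    rw [← hs]
    refine Ideal.span_le.mpr fun p hp => ?_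
    obtain ⟨h1, h2⟩ := hl p hp
    have h3 : l p ≤ m := hm (Set.mem_insert_of_mem _ ⟨p, hp, rfl⟩)
    change f j m hjm (γ p) = 0
    rw [← DirectedSystem.map_map (f := fun i j h => f i j h) h1 h3, h2, map_zero]
  let α : E →+* G m := (RingHom.liftOfSurjective π.toRingHom hπ) ⟨_, hk⟩
  refine ⟨m, α, ?_⟩
  have hα : ∀ p, α (π p) = f j m hjm (γ p) := fun p =>
    RingHom.liftOfRightInverse_comp_apply π.toRingHom _ _ ⟨_, hk⟩ p
  ext y
  obtain ⟨p, rfl⟩ := hπ y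
  rw [RingHom.comp_apply, hα, Ring.DirectLimit.of_f]
  exact congr($hγ p)

/-- The main approximation step: points of essentially finite type `E`-algebras with values in the
completion descend to `A`. -/
theorem descend_point (A : Type u) [CommRing A] [IsLocalRing A]
    [HenselianLocalRing A]
    (hGND : ∀ (B : Type u) [CommRing B] [Algebra A B], Algebra.FiniteType A B →
      ∀ v : B →ₐ[A] AdicCompl A, ∃ (C : Type u) (_ : CommRing C) (_ : Algebra A C),
        Algebra.Smooth A C ∧ ∃ (s : B →ₐ[A] C) (t : C →ₐ[A] AdicCompl A), t.comp s = v)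
    {E D : Type u} [CommRing E] [Algebra E A] [CommRing D] [Algebra E D]
    (hD : Algebra.EssFiniteType E D) (v : D →ₐ[E] AdicCompl A) :
    Nonempty (D →ₐ[E] A) := by
  let D₀ := Algebra.EssFiniteType.subalgebra E D
  let M := Algebra.EssFiniteType.submonoid E D
  let B := TensorProduct E A D₀
  let vB : B →ₐ[A] AdicCompl A :=
    Algebra.TensorProduct.lift (Algebra.ofId A _) (v.comp D₀.val) (fun _ _ => .all _ _)
  obtain ⟨C, _, _, _, s, t, hst⟩ := hGND B inferInstance vB
  let φ : C →ₐ[A] ResidueField A := (AdicCompletion.evalOneₐ (maximalIdeal A)).comp t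
  obtain ⟨σ, hσ⟩ := henselian_lift_smooth φ
  let ρ : D₀ →ₐ[E] A := ((σ.comp s).restrictScalars E).comp Algebra.TensorProduct.includeRight
  have hρ : ∀ d : D₀, residue A (ρ d) = AdicCompletion.evalOneₐ (maximalIdeal A) (v d) := by
    intro d
    change residue A (σ (s (1 ⊗ₜ d))) = _
    rw [hσ]
    change AdicCompletion.evalOneₐ (maximalIdeal A) ((t.comp s) (1 ⊗ₜ d)) = _
    have hv : vB (1 ⊗ₜ d) = v d := by
      refine (Algebra.TensorProduct.lift_tmul _ _ _ _ _).trans ?_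
      rw [map_one, one_mul]
      rfl
    rw [hst]
    exact congrArg _ hv
  have hM : ∀ d : M, IsUnit (ρ d) := by
    intro d
    apply isUnit_of_map_unit (residue A)
    rw [hρ]
    have : IsUnit (d : D₀).1 := d.2
    exact (this.map v).map (AdicCompletion.evalOneₐ (maximalIdeal A))
  exact ⟨IsLocalization.liftAlgHom (M := M) (S := D) (f := ρ) hM⟩

/-- Let `(A,m)` be an excellent Henselian local ring satisfying General Neron
Desingularization (every `A`-morphism from a finite type `A`-algebra to `Â` factors through
a smooth `A`-algebra), and suppose `Â` is a filtered inductive limit of regular local rings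
essentially of finite type over `ℤ`. Then for every finite type `ℤ`-subalgebra `E` of `A`,
the inclusion `E → A` factors through a regular local ring essentially of finite type
over `ℤ`. -/
theorem factor_through_regular_of_GND (A : Type u) [CommRing A] [IsLocalRing A]
    [IsNoetherianRing A] [HenselianLocalRing A]
    (hGND : ∀ (B : Type u) [CommRing B] [Algebra A B], Algebra.FiniteType A B →
      ∀ v : B →ₐ[A] AdicCompl A, ∃ (C : Type u) (_ : CommRing C) (_ : Algebra A C),
        Algebra.Smooth A C ∧ ∃ (s : B →ₐ[A] C) (t : C →ₐ[A] AdicCompl A), t.comp s = v)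
    (ι : Type v) [Preorder ι] [IsDirected ι (· ≤ ·)] [Nonempty ι]
    (G : ι → Type u) [∀ i, CommRing (G i)] [∀ i, IsLocalRing (G i)]
    (hGreg : ∀ i, IsRegularLocal (G i))
    (hGess : ∀ i, Algebra.EssFiniteType ℤ (G i))
    (f : ∀ i j : ι, i ≤ j → G i →+* G j)
    [DirectedSystem G fun i j h => f i j h]
    (e : AdicCompl A ≃+* Ring.DirectLimit G fun i j h => f i j h)
    (E : Subring A) (hE : Algebra.FiniteType ℤ E) :
    ∃ (D : Type u) (_ : CommRing D) (_ : IsLocalRing D), IsRegularLocal D ∧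
      Algebra.EssFiniteType ℤ D ∧
      ∃ (α : E →+* D) (β : D →+* A), β.comp α = E.subtype := by
  let w : E →+* Ring.DirectLimit G fun i j h => f i j h :=
    (e : AdicCompl A →+* _).comp ((algebraMap A (AdicCompl A)).comp E.subtype)
  obtain ⟨i, α, hα⟩ := factor_directLimit G f hE w
  letI : Algebra E (G i) := α.toAlgebra
  have := hGess i
  have hD : Algebra.EssFiniteType E (G i) := Algebra.EssFiniteType.of_comp ℤ E (G i)
  let v : G i →ₐ[E] AdicCompl A :=
    { (e.symm : _ →+* AdicCompl A).comp (Ring.DirectLimit.of G (fun i j h => f i j h) i) with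
      commutes' := fun r => by
        change e.symm (Ring.DirectLimit.of G (fun i j h => f i j h) i (α r)) = _
        have h := congr($hα r)
        rw [RingHom.comp_apply] at h
        rw [h, RingEquiv.symm_apply_eq]
        rfl }
  obtain ⟨β⟩ := descend_point A hGND hD v
  refine ⟨G i, inferInstance, inferInstance, hGreg i, hGess i, α, β.toRingHom, ?_⟩
  ext r
  exact β.commutes r
end
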